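/- arXiv:1706.01057 — 3 statements merged into one kernel-verified Lean document; each statement's English description precedes it below -/
import Mathlib

section
/- Let p ∈ (0,1), let D : ℝ → ℝ be monotone increasing on the interval (0,1], and suppose D(α) tends to a limit L as α → 0 from the right within (0,1]. Define τ(α) = (α·(1−p)·D(α) + 1)/(α·(1−p) + p). Then τ(α) ≥ 1/p for every α ∈ (0,1] if and only if L ≥ 1/p; moreover, if L > 1/p, then τ(α) > 1/p for every α ∈ (0,1]. -/
/-!
Since `1 = p * (1 / p)`, the delay `τ α` is the weighted mean of the relay delay `D α` and the
non-cooperative delay `1 / p`, with weights `α * (1 - p)` and `p`. A weighted mean compares with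
one of its two values exactly as the other value does, so `τ α` may be replaced by `D α`; and by
monotonicity the limit `L` is the greatest lower bound of `D` on `(0, 1]`.
-/

section WeightedMean

variable {K : Type*} [Field K] [LinearOrder K] [IsStrictOrderedRing K] {v w x y : K}

lemma le_weighted_mean_iff (hv : 0 < v) (hvw : 0 < v + w) :
    y ≤ (v * x + w * y) / (v + w) ↔ y ≤ x := by
  rw [le_div_iff₀ hvw, mul_comm, add_mul, add_le_add_iff_right, mul_le_mul_iff_right₀ hv]

lemma lt_weighted_mean_iff (hv : 0 < v) (hvw : 0 < v + w) :
    y < (v * x + w * y) / (v + w) ↔ y < x := by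
  rw [lt_div_iff₀ hvw, mul_comm, add_mul, add_lt_add_iff_right, mul_lt_mul_iff_right₀ hv]

end WeightedMean

/-- Lemma 5: non-cooperation (delay `1/p`) is delay-optimal among
static policies iff the limiting relay delay `L = lim_{α→0⁺} D(α)` is at least `1/p`. -/
theorem stmt_4 (p : ℝ) (hp : p ∈ Set.Ioo (0:ℝ) 1) (D : ℝ → ℝ) (L : ℝ)
    (hmono : MonotoneOn D (Set.Ioc (0:ℝ) 1))
    (hlim : Filter.Tendsto D (nhdsWithin 0 (Set.Ioc (0:ℝ) 1)) (nhds L)) :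
    let τ : ℝ → ℝ := fun α => (α * (1 - p) * D α + 1) / (α * (1 - p) + p)
    ((∀ α ∈ Set.Ioc (0:ℝ) 1, τ α ≥ 1 / p) ↔ L ≥ 1 / p) ∧
    (L > 1 / p → ∀ α ∈ Set.Ioc (0:ℝ) 1, τ α > 1 / p) := by
  intro τ
  obtain ⟨hp_pos, hp_lt_one⟩ := hp
  have hτ (α : ℝ) : τ α = (α * (1 - p) * D α + p * (1 / p)) / (α * (1 - p) + p) := by
    rw [mul_one_div_cancel hp_pos.ne']
  have hweight {α : ℝ} (hα : α ∈ Set.Ioc (0:ℝ) 1) : 0 < α * (1 - p) :=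
    mul_pos hα.1 (sub_pos.mpr hp_lt_one)
  have hglb : IsGLB (D '' Set.Ioc 0 1) L :=
    (isGLB_Ioc one_pos).isGLB_of_tendsto hmono (Set.nonempty_Ioc.mpr one_pos) hlim
  constructor
  · calc (∀ α ∈ Set.Ioc (0:ℝ) 1, 1 / p ≤ τ α)
        ↔ ∀ α ∈ Set.Ioc (0:ℝ) 1, 1 / p ≤ D α := forall₂_congr fun α hα => by
          rw [hτ, le_weighted_mean_iff (hweight hα) (add_pos (hweight hα) hp_pos)]
      _ ↔ 1 / p ≤ L := by rw [le_isGLB_iff hglb, mem_lowerBounds, Set.forall_mem_image]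
  · intro hL α hα
    have hD : 1 / p < D α := hL.trans_le (hglb.1 (Set.mem_image_of_mem D hα))
    rwa [gt_iff_lt, hτ, lt_weighted_mean_iff (hweight hα) (add_pos (hweight hα) hp_pos)]
end

section
/- Let p ∈ (0,1) and let D : ℝ → ℝ be twice continuously differentiable. Define τ(α) = (α·(1−p)·D(α) + 1)/(α·(1−p) + p). Let α ≥ 0 be such that D'(α) ≥ 0, D''(α) ≥ 0, and D(α) < 1/p. Then the second derivative of τ at α is strictly positive: (deriv (deriv τ)) α > 0. -/
/-!
The delay is the average of `D x` and `1 / p` with weights `x * (1 - p)` and `p`. Since the weights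
are affine, differentiating this average twice gives a sum of three terms, which are nonnegative
multiples of `D''`, of `D'` and of `1 - p * D`; the coefficient of the last one is positive.
-/

open Topology

/-- The average of `D x` and `b / p` with weights `x * q` and `p`, written without dividing by `p`.
The end-to-end delay `τ` is the case `q = 1 - p`, `b = 1`; keeping the three parameters independent
makes the formulas for its derivatives formal identities over any nontrivially normed field. -/
def weightedDelay {𝕜 : Type*} [Field 𝕜] (p q b : 𝕜) (D : 𝕜 → 𝕜) (x : 𝕜) : 𝕜 :=
  (x * q * D x + b) / (x * q + p)

section Derivatives

variable {𝕜 : Type*} [NontriviallyNormedField 𝕜] {p q b x : 𝕜} {D : 𝕜 → 𝕜}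

theorem hasDerivAt_weightedDelay {D' : 𝕜} (hD : HasDerivAt D D' x) (hw : x * q + p ≠ 0) :
    HasDerivAt (weightedDelay p q b D)
      (x * q * D' / (x * q + p) - q * (b - p * D x) / (x * q + p) ^ 2) x := by
  have hweight : HasDerivAt (· * q) q x := hasDerivAt_mul_const q
  refine (((hweight.mul hD).add_const b).div (hweight.add_const p) hw).congr_deriv ?_
  simp only [Pi.mul_apply]
  field_simp
  ring

theorem deriv_weightedDelay_eventuallyEq (hD : ∀ᶠ y in 𝓝 x, DifferentiableAt 𝕜 D y)
    (hw : x * q + p ≠ 0) :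
    deriv (weightedDelay p q b D) =ᶠ[𝓝 x] fun y ↦
      y * q * deriv D y / (y * q + p) - q * (b - p * D y) / (y * q + p) ^ 2 := by
  have hcont : ContinuousAt (fun y ↦ y * q + p) x := by fun_prop
  filter_upwards [hD, hcont.eventually_ne hw] with y hDy hwy
  exact (hasDerivAt_weightedDelay hDy.hasDerivAt hwy).deriv

theorem deriv_deriv_weightedDelay (hD : ∀ᶠ y in 𝓝 x, DifferentiableAt 𝕜 D y)
    (hD' : DifferentiableAt 𝕜 (deriv D) x) (hw : x * q + p ≠ 0) :
    deriv (deriv (weightedDelay p q b D)) x =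
      x * q * deriv (deriv D) x / (x * q + p)
        + 2 * p * q * deriv D x / (x * q + p) ^ 2
        + 2 * q ^ 2 * (b - p * D x) / (x * q + p) ^ 3 := by
  have hweight : HasDerivAt (· * q) q x := hasDerivAt_mul_const q
  have htotal : HasDerivAt (fun y ↦ y * q + p) q x := hweight.add_const p
  have hslope : HasDerivAt (fun y ↦ y * q * deriv D y / (y * q + p))
      (x * q * deriv (deriv D) x / (x * q + p) + p * q * deriv D x / (x * q + p) ^ 2) x := by
    refine ((hweight.mul hD'.hasDerivAt).div htotal hw).congr_deriv ?_
    simp only [Pi.mul_apply]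
    field_simp
    ring
  have hgap : HasDerivAt (fun y ↦ q * (b - p * D y) / (y * q + p) ^ 2)
      (-(p * q * deriv D x / (x * q + p) ^ 2)
        - 2 * q ^ 2 * (b - p * D x) / (x * q + p) ^ 3) x := by
    have hnum := ((hD.self_of_nhds.hasDerivAt.const_mul p).const_sub b).const_mul q
    refine (hnum.div (htotal.fun_pow 2) (pow_ne_zero 2 hw)).congr_deriv ?_
    generalize x * q + p = w at hw ⊢
    field_simp
    ring
  rw [(deriv_weightedDelay_eventuallyEq hD hw).deriv_eq, (hslope.fun_sub hgap).deriv]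
  ring

end Derivatives

theorem stmt_6_general {p q b α : ℝ} {D : ℝ → ℝ} (hp : 0 ≤ p) (hq : 0 < q) (hα : 0 ≤ α)
    (hw : 0 < α * q + p) (hD : ∀ᶠ x in 𝓝 α, DifferentiableAt ℝ D x)
    (hD' : DifferentiableAt ℝ (deriv D) α) (hD1 : 0 ≤ deriv D α) (hD2 : 0 ≤ deriv (deriv D) α)
    (hDlt : p * D α < b) : 0 < deriv (deriv (weightedDelay p q b D)) α := by
  rw [deriv_deriv_weightedDelay hD hD' hw.ne']
  have : 0 < b - p * D α := sub_pos.2 hDlt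
  positivity

/-- Lemma 6: strict convexity point of the end-to-end delay:
if `D'(α) ≥ 0`, `D''(α) ≥ 0` and `D(α) < 1/p`, then `τ''(α) > 0`, where
`τ(α) = (α(1-p)D(α)+1)/(α(1-p)+p)`. -/
theorem stmt_6 (p : ℝ) (hp : p ∈ Set.Ioo (0:ℝ) 1) (D : ℝ → ℝ)
    (hD : ContDiff ℝ 2 D) (α : ℝ) (hα : 0 ≤ α)
    (hD1 : deriv D α ≥ 0) (hD2 : deriv (deriv D) α ≥ 0) (hDlt : D α < 1 / p) :
    let τ : ℝ → ℝ := fun x => (x * (1 - p) * D x + 1) / (x * (1 - p) + p)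
    deriv (deriv τ) α > 0 := by
  obtain ⟨hp0, hp1⟩ := hp
  have hq : 0 < 1 - p := sub_pos.2 hp1
  exact stmt_6_general hp0.le hq hα (by positivity)
    (.of_forall (hD.differentiable two_ne_zero)) (hD.differentiable_deriv_two α) hD1 hD2
    ((lt_div_iff₀' hp0).1 hDlt)
end

section
/- Let n ≥ 1, let k be an index in {1,…,n}, and let F̂ and F̃ be real n×n matrices such that every row of F̃ other than row k is zero (i.e., F̃_{ij} = 0 whenever i ≠ k). Let ν : ℝ → ℝⁿ be twice differentiable (coordinatewise) such that for all β ∈ ℝ: (i) ν(β)·(F̂ + β·F̃) = ν(β) as a row-vector–matrix product, and (ii) the k-th coordinate of ν(β) equals 1. Assume moreover that the only row vector w ∈ ℝⁿ satisfying w·F̂ = w and w_k = 0 is w = 0. Then there exist vectors a, b ∈ ℝⁿ with a_k = 0 and b_k = 1 such that ν(β) = β·a + b for all β ∈ ℝ. -/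
/-! Since only row `k` of `F̃` is nonzero and `ν(β)` has `k`-th coordinate `1`, the eigenvector
equation reads `ν(β) - ν(β) F̂ = β F̃ₖ`, with `F̃ₖ` the `k`-th row of `F̃`. Thus the linear map
`w ↦ (w - w F̂, wₖ)` sends `ν(β)` to `β (F̃ₖ, 0) + (0, 1)`. Uniqueness says that this map is
injective, and a curve with affine image under an injective linear map is affine. -/

open Matrix

theorem eq_lineMap_of_map_eq_smul_add {R M N : Type*} [Ring R] [AddCommGroup M] [Module R M]
    [AddCommGroup N] [Module R N] {L : M →ₗ[R] N} (hL : Function.Injective L) {x : R → M} {c d : N}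
    (hx : ∀ t, L (x t) = t • c + d) (t : R) : x t = AffineMap.lineMap (x 0) (x 1) t := by
  apply hL
  rw [AffineMap.lineMap_apply_module']
  simp only [map_add, map_smul, map_sub, hx, zero_smul, one_smul, zero_add, add_sub_cancel_right]

section VecMul

variable {ι : Type*} [Fintype ι] {k : ι}

theorem vecMul_eq_smul_row_of_forall_ne {κ R : Type*} [NonUnitalNonAssocSemiring R]
    {B : Matrix ι κ R} (hB : ∀ i j, i ≠ k → B i j = 0) (v : ι → R) : v ᵥ* B = v k • B.row k := by
  ext j
  exact Fintype.sum_eq_single k fun i hi => mul_eq_zero_of_right (v i) (hB i j hi)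

variable {R : Type*} [Ring R] {A B : Matrix ι ι R}

theorem self_sub_vecMul_eq_smul_row (hB : ∀ i j, i ≠ k → B i j = 0) {t : R} {v : ι → R}
    (hv : v ᵥ* (A + t • B) = v) (hvk : v k = 1) : v - v ᵥ* A = t • B.row k := by
  have htB : ∀ i j, i ≠ k → (t • B) i j = 0 := fun i j hi => by
    rw [Matrix.smul_apply, hB i j hi, smul_zero]
  have hrow : v ᵥ* (t • B) = t • B.row k := calc
    v ᵥ* (t • B) = v k • (t • B).row k := vecMul_eq_smul_row_of_forall_ne htB v
    _ = t • B.row k := by rw [hvk, one_smul]; rfl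
  rw [vecMul_add, hrow] at hv
  exact sub_eq_of_eq_add' hv.symm

theorem injective_id_sub_vecMulLinear_prod_proj
    (hA : ∀ w : ι → R, w ᵥ* A = w → w k = 0 → w = 0) :
    Function.Injective ((LinearMap.id - A.vecMulLinear).prod (LinearMap.proj k)) := by
  refine (injective_iff_map_eq_zero _).mpr fun w hw => ?_
  obtain ⟨hfix, hwk⟩ := Prod.ext_iff.mp hw
  exact hA w (sub_eq_zero.mp hfix).symm hwk

end VecMul

theorem stmt_10_general {ι R : Type*} [Fintype ι] [Ring R] (k : ι) (Fhat Ftil : Matrix ι ι R)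
    (hrow : ∀ i j, i ≠ k → Ftil i j = 0) (ν : R → ι → R)
    (heig : ∀ β, ν β ᵥ* (Fhat + β • Ftil) = ν β) (hnorm : ∀ β, ν β k = 1)
    (huniq : ∀ w : ι → R, w ᵥ* Fhat = w → w k = 0 → w = 0) :
    ∃ a b : ι → R, a k = 0 ∧ b k = 1 ∧ ∀ β, ν β = β • a + b := by
  have himage (β : R) : (LinearMap.id - Fhat.vecMulLinear).prod (LinearMap.proj k) (ν β) =
      β • (Ftil.row k, (0 : R)) + (0, 1) := by
    ext1
    · simpa using self_sub_vecMul_eq_smul_row hrow (heig β) (hnorm β)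
    · simpa using hnorm β
  refine ⟨ν 1 - ν 0, ν 0, by rw [Pi.sub_apply, hnorm, hnorm, sub_self], hnorm 0, fun β => ?_⟩
  rw [← AffineMap.lineMap_apply_module']
  exact eq_lineMap_of_map_eq_smul_add (injective_id_sub_vecMulLinear_prod_proj huniq) himage β

/-- Appendix B: the normalized left 1-eigenvector of the
policy-dependent transition matrix `F̂ + β·F̃` (where only row `k` of `F̃` is
nonzero) is an affine function of `β`. -/
theorem stmt_10 (n : ℕ) (hn : 1 ≤ n) (k : Fin n)
    (Fhat Ftil : Matrix (Fin n) (Fin n) ℝ)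
    (hrow : ∀ i j : Fin n, i ≠ k → Ftil i j = 0)
    (ν : ℝ → (Fin n → ℝ))
    (hdiff1 : ∀ i : Fin n, Differentiable ℝ (fun β => ν β i))
    (hdiff2 : ∀ i : Fin n, Differentiable ℝ (deriv (fun β => ν β i)))
    (heig : ∀ β : ℝ, Matrix.vecMul (ν β) (Fhat + β • Ftil) = ν β)
    (hnorm : ∀ β : ℝ, ν β k = 1)
    (huniq : ∀ w : Fin n → ℝ, Matrix.vecMul w Fhat = w → w k = 0 → w = 0) :
    ∃ a b : Fin n → ℝ, a k = 0 ∧ b k = 1 ∧ ∀ β : ℝ, ν β = β • a + b :=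
  stmt_10_general k Fhat Ftil hrow ν heig hnorm huniq
end
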